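/- arXiv:0906.4093 — 4 statements merged into one kernel-verified Lean document; each statement's English description precedes it below -/
import Mathlib

section
/- Let K be a field of characteristic p with separable closure K^sep, and let (V, φ) be a unit K[F^r]-module which is finite-dimensional over K, of dimension n. Then there is an isomorphism of unit K^sep[F^r]-modules K^sep ⊗_K V ≅ (K^sep)^{⊕n}, i.e. a K^sep-linear bijection carrying the endomorphism c ⊗ v ↦ c^q ⊗ φ(v) of K^sep ⊗_K V to the coordinatewise q-power map on (K^sep)^{⊕n}. Equivalently, K^sep ⊗_K V has a K^sep-basis consisting of vectors fixed by c ⊗ v ↦ c^q ⊗ φ(v). -/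
/-!
Common definitions: unit `R[F^r]`-modules (Emerton–Kisin / Lyubeznik style), following
the conventions of the paper.  Throughout, `q = p ^ r` and for a commutative ring `R` of
(exponential) characteristic `p`, a unit `R[F^r]`-module is an `R`-module `M` together with
an additive `q`-semilinear map `φ : M → M` whose induced structural map
`R ⊗_{Frob} M → M`, `c ⊗ m ↦ c • φ m`, is bijective.
-/

open scoped TensorProduct

section Preamble

/-- `R` viewed as a module over itself via the `q = p ^ r`-power Frobenius:
`c • x = c ^ p ^ r * x`. -/
def FrobTwist (p r : ℕ) (R : Type*) : Type _ := R

instance (p r : ℕ) (R : Type*) [CommRing R] : AddCommGroup (FrobTwist p r R) :=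
  inferInstanceAs (AddCommGroup R)

noncomputable instance (p r : ℕ) (R : Type*) [CommRing R] [ExpChar R p] :
    Module R (FrobTwist p r R) :=
  Module.compHom R (iterateFrobenius R p r)

theorem FrobTwist.smul_def {p r : ℕ} {R : Type*} [CommRing R] [ExpChar R p] (c : R)
    (x : FrobTwist p r R) : c • x = (c ^ p ^ r * (show R from x) : R) := rfl

variable (p r : ℕ)
variable (R : Type*) [CommRing R] [ExpChar R p]
variable {M : Type*} [AddCommGroup M] [Module R M]

/-- `φ` is additive and `q = p ^ r`-semilinear: `φ (c • m) = c ^ q • φ m`. -/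
def IsFrobSemilinear (φ : M →+ M) : Prop :=
  ∀ (c : R) (m : M), φ (c • m) = c ^ p ^ r • φ m

/-- The structural map `R ⊗_{Frob} M → M`, `c ⊗ m ↦ c • φ m`. -/
noncomputable def unitMap (φ : M →+ M) (hφ : IsFrobSemilinear p r R φ) :
    FrobTwist p r R ⊗[R] M →+ M :=
  TensorProduct.liftAddHom
    (AddMonoidHom.mk'
      (fun c : FrobTwist p r R =>
        AddMonoidHom.mk' (fun m : M => (show R from c) • φ m)
          (fun m m' => by
            show (show R from c) • φ (m + m') =
              (show R from c) • φ m + (show R from c) • φ m'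
            rw [map_add, smul_add]))
      (fun c c' => by
        ext m
        show ((show R from c) + (show R from c')) • φ m = _
        rw [add_smul]
        rfl))
    (fun a c m => by
      show (a ^ p ^ r * (show R from c)) • φ m = (show R from c) • φ (a • m)
      rw [hφ, mul_comm, mul_smul])

/-- `(M, φ)` is a unit `R[F^r]`-module: `φ` is `q = p ^ r`-semilinear and the induced
structural map `R ⊗_{Frob} M → M` is bijective. -/
def IsUnitFMod (φ : M →+ M) : Prop :=
  ∃ hφ : IsFrobSemilinear p r R φ, Function.Bijective (unitMap p r R φ hφ)

/-- `(M, φ)` is finitely generated as a left `R[F^r]`-module: there is a finite subset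
`s ⊆ M` such that the only `φ`-stable `R`-submodule of `M` containing `s` is `M` itself. -/
def IsFGFMod (φ : M →+ M) : Prop :=
  ∃ s : Finset M, ∀ N : Submodule R M, (∀ x ∈ N, φ x ∈ N) → (↑s : Set M) ⊆ ↑N → N = ⊤

/-- A root of `(M, φ)`: a finitely generated submodule `M₀` such that the submodule
generated by `φ (M₀)` contains `M₀`, and such that the only `φ`-stable submodule
containing `M₀` is `M` itself. -/
def IsRoot (φ : M →+ M) (M₀ : Submodule R M) : Prop :=
  M₀.FG ∧ M₀ ≤ Submodule.span R (⇑φ '' ↑M₀) ∧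
    ∀ N : Submodule R M, (∀ x ∈ N, φ x ∈ N) → M₀ ≤ N → N = ⊤

end Preamble

/-!
By semilinearity, an isomorphism with `(K^sep)^{⊕n}` amounts to a basis of fixed vectors, so it is
enough that over a separably closed field `L` of characteristic `p` the fixed vectors of a
`q`-semilinear `f : W → W` whose image spans `W` span `W`.

A nonzero `W` contains a nonzero fixed vector. A dimension count makes `f` injective, so for
`v ≠ 0` the first linear relation among `v, f v, f² v, …` has the form
`f^{k+1} v = ∑_{i ≤ k} a_i f^i v` with some `a_i ≠ 0`. The vector `∑_{i ≤ k} x_i f^i v` is fixed as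
soon as `x_0 = x_k^q a_0` and `x_{i+1} = x_i^q + x_k^q a_{i+1}`; eliminating all unknowns but
`t = x_k` leaves one equation `P(t) = t`, where `P ≠ 0`, `P' = 0` and `P(0) = 0`. Then `P - X` is
separable, and it has a nonzero root.

Let `U` be the span of the fixed vectors. If `U ≠ W`, then `W / U` has a nonzero fixed vector, and
its lifts `w` satisfy `f w - w ∈ U`. By Artin–Schreier `f - 1` maps `U` onto itself, so `w` may be
corrected by an element of `U` to a fixed vector, which puts `w` in `U`: a contradiction.
-/

section Polynomial

open Polynomial

/-- The coordinate `x_i` of a fixed vector `∑_{i ≤ k} x_i f^i v` of a `q`-semilinear map `f` with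
`f^{k+1} v = ∑_{i ≤ k} a_i f^i v`, as a polynomial in the last coordinate `t = x_k`. It does not
depend on `k`; the remaining condition on `t` is that the `k`-th polynomial takes the value `t`. -/
noncomputable def fixedCoord {R : Type*} [CommSemiring R] (q : ℕ) (a : ℕ → R) : ℕ → R[X]
  | 0 => X ^ q * C (a 0)
  | i + 1 => fixedCoord q a i ^ q + X ^ q * C (a (i + 1))

namespace fixedCoord

variable {R : Type*} [CommSemiring R] {q : ℕ} (a : ℕ → R)

theorem X_pow_dvd (hq : q ≠ 0) (i : ℕ) : X ^ q ∣ fixedCoord q a i := by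
  induction i with
  | zero => exact dvd_mul_right _ _
  | succ i ih =>
    exact dvd_add (pow_dvd_pow_of_dvd ((dvd_pow_self X hq).trans ih) q) (dvd_mul_right _ _)

theorem eval_zero (hq : q ≠ 0) (i : ℕ) : (fixedCoord q a i).eval 0 = 0 := by
  obtain ⟨P, hP⟩ := X_pow_dvd a hq i
  rw [hP, eval_mul, eval_pow, eval_X, zero_pow hq, zero_mul]

theorem derivative_eq_zero (hq : (q : R) = 0) (i : ℕ) : derivative (fixedCoord q a i) = 0 := by
  cases i <;> simp [fixedCoord, derivative_pow, hq]

theorem coeff_self (hq : 1 < q) (i : ℕ) : (fixedCoord q a i).coeff q = a i := by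
  cases i with
  | zero => simp [fixedCoord]
  | succ i =>
    have hdvd : X ^ (q * q) ∣ fixedCoord q a i ^ q := by
      rw [pow_mul]
      exact pow_dvd_pow_of_dvd (X_pow_dvd a (by omega) i) q
    have hcoeff : (fixedCoord q a i ^ q).coeff q = 0 :=
      X_pow_dvd_iff.1 hdvd q (by nlinarith)
    simp [fixedCoord, hcoeff]

theorem ne_zero [NoZeroDivisors R] {a : ℕ → R} (hq : 1 < q) {i j : ℕ} (hij : i ≤ j)
    (ha : a i ≠ 0) : fixedCoord q a j ≠ 0 := by
  induction j, hij using Nat.le_induction with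
  | base =>
    intro h
    exact ha (by rw [← coeff_self a hq, h, coeff_zero])
  | succ j _ ih =>
    intro h
    have haj : a (j + 1) = 0 := by rw [← coeff_self a hq, h, coeff_zero]
    rw [fixedCoord, haj, C_0, mul_zero, add_zero] at h
    exact ih (eq_zero_of_pow_eq_zero h)

end fixedCoord

theorem separable_sub_X_of_derivative_eq_zero {R : Type*} [CommRing R] {P : R[X]}
    (hP : derivative P = 0) : (P - X).Separable :=
  (separable_def' _).2 ⟨0, -1, by simp [hP]⟩

theorem exists_ne_zero_eval_eq_self {L : Type*} [Field L] [IsSepClosed L] {P : L[X]} (hP : P ≠ 0)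
    (hP' : derivative P = 0) (hP0 : P.eval 0 = 0) : ∃ t ≠ 0, P.eval t = t := by
  obtain ⟨Q, rfl⟩ : X ∣ P := by rwa [X_dvd_iff, coeff_zero_eq_eval_zero]
  have hQ0 : Q.eval 0 = 0 := by simpa [derivative_mul] using congrArg (eval 0) hP'
  have hdegree : (Q - 1).degree ≠ 0 := by
    have hpos : 0 < Q.degree := degree_pos_of_root (right_ne_zero_of_mul hP) hQ0
    rw [← C_1, degree_sub_C hpos]
    exact hpos.ne'
  have hdvd : Q - 1 ∣ X * Q - X := ⟨X, by ring⟩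
  obtain ⟨t, ht⟩ := IsSepClosed.exists_root (Q - 1) hdegree
    ((separable_sub_X_of_derivative_eq_zero hP').of_dvd hdvd)
  have hQt : Q.eval t = 1 := by simpa [sub_eq_zero] using ht
  refine ⟨t, ?_, by rw [eval_mul, eval_X, hQt, mul_one]⟩
  rintro rfl
  exact zero_ne_one (hQ0.symm.trans hQt)

theorem exists_fixed_coordinates {L : Type*} [Field L] [IsSepClosed L] {q : ℕ} (hq : 1 < q)
    (hq_cast : (q : L) = 0) {a : ℕ → L} {i k : ℕ} (hik : i ≤ k) (ha : a i ≠ 0) :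
    ∃ x : ℕ → L, x k ≠ 0 ∧ x 0 = x k ^ q * a 0 ∧
      ∀ j, x (j + 1) = x j ^ q + x k ^ q * a (j + 1) := by
  obtain ⟨t, ht, htk⟩ := exists_ne_zero_eval_eq_self (fixedCoord.ne_zero hq hik ha)
    (fixedCoord.derivative_eq_zero a hq_cast k) (fixedCoord.eval_zero a (by omega) k)
  refine ⟨fun j => (fixedCoord q a j).eval t, ?_, ?_, fun j => ?_⟩ <;> simp only [htk]
  · exact ht
  · simp only [fixedCoord, eval_mul, eval_pow, eval_X, eval_C]
  · simp only [fixedCoord, eval_add, eval_mul, eval_pow, eval_X, eval_C]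

end Polynomial

section Semilinear

open Function

theorem injective_of_span_range_eq_top {K L V W : Type*} [DivisionRing K] [DivisionRing L]
    [AddCommGroup V] [Module K V] [FiniteDimensional K V] [AddCommGroup W] [Module L W]
    {σ : K →+* L} (f : V →ₛₗ[σ] W) (hVW : Module.finrank K V = Module.finrank L W)
    (hf : Submodule.span L (Set.range f) = ⊤) : Injective f := by
  let b := Module.finBasis K V
  have map_eq_sum (x : V) : f x = ∑ i, σ (b.repr x i) • f (b i) := by
    conv_lhs => rw [← b.sum_repr x, map_sum]
    simp only [map_smulₛₗ]
  have hspan : ⊤ ≤ Submodule.span L (Set.range (f ∘ b)) := by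
    rw [← hf, Submodule.span_le]
    rintro _ ⟨x, rfl⟩
    rw [map_eq_sum]
    exact Submodule.sum_mem _ fun i _ =>
      Submodule.smul_mem _ _ (Submodule.subset_span (Set.mem_range_self i))
  have hindep : LinearIndependent L (f ∘ b) :=
    linearIndependent_of_top_le_span_of_card_eq_finrank hspan (by rw [Fintype.card_fin, hVW])
  refine (injective_iff_map_eq_zero f).2 fun x hx => b.repr.map_eq_zero_iff.1 ?_
  ext i
  rw [map_eq_sum] at hx
  exact (map_eq_zero σ).1 (Fintype.linearIndependent_iff.1 hindep _ hx i)

theorem exists_succ_eq_sum_range {R M : Type*} [Ring R] [AddCommGroup M] [Module R M]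
    [IsNoetherian R M] (u : ℕ → M) (hu : u 0 ≠ 0) :
    ∃ (k : ℕ) (a : ℕ → R), u (k + 1) = ∑ i ∈ Finset.range (k + 1), a i • u i ∧
      u k ∉ Submodule.span R (u '' Finset.range k) := by
  classical
  let T (m : ℕ) : Submodule R M := Submodule.span R (u '' Finset.range m)
  have hT : Monotone T := fun _ _ h =>
    Submodule.span_mono (Set.image_mono (Finset.coe_subset.2 (Finset.range_mono h)))
  have exists_mem : ∃ m, u m ∈ T m := by
    obtain ⟨m, hm⟩ := monotone_stabilizes_iff_noetherian.2 ‹IsNoetherian R M› ⟨T, hT⟩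
    refine ⟨m, ?_⟩
    rw [show T m = T (m + 1) from hm (m + 1) m.le_succ]
    exact Submodule.subset_span ⟨m, by simp, rfl⟩
  obtain ⟨k, hk⟩ : ∃ k, Nat.find exists_mem = k + 1 := by
    refine Nat.exists_eq_succ_of_ne_zero fun h => hu ?_
    have hmem : u 0 ∈ T 0 := h ▸ Nat.find_spec exists_mem
    simpa [T] using hmem
  have hmem : u (k + 1) ∈ T (k + 1) := hk ▸ Nat.find_spec exists_mem
  obtain ⟨a, ha⟩ := Submodule.mem_span_image_finset_iff_exists_fun' R |>.1 hmem
  exact ⟨k, a, ha.symm, Nat.find_min exists_mem (by omega)⟩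

theorem isFixedPt_sum_smul_iterate {R M : Type*} [Semiring R] [AddCommMonoid M] [Module R M]
    {σ : R →+* R} (f : M →ₛₗ[σ] M) {v : M} {k : ℕ} {a x : ℕ → R}
    (hv : f^[k + 1] v = ∑ i ∈ Finset.range (k + 1), a i • f^[i] v)
    (hx_zero : x 0 = σ (x k) * a 0)
    (hx_succ : ∀ i < k, x (i + 1) = σ (x i) + σ (x k) * a (i + 1)) :
    IsFixedPt f (∑ i ∈ Finset.range (k + 1), x i • f^[i] v) := by
  have hx : ∀ i ∈ Finset.range k, x (i + 1) • f^[i + 1] v =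
      σ (x i) • f^[i + 1] v + σ (x k) • a (i + 1) • f^[i + 1] v := fun i hi => by
    rw [hx_succ i (Finset.mem_range.1 hi), add_smul, mul_smul]
  calc f (∑ i ∈ Finset.range (k + 1), x i • f^[i] v)
      = ∑ i ∈ Finset.range (k + 1), σ (x i) • f^[i + 1] v := by
        simp only [map_sum, map_smulₛₗ, iterate_succ_apply']
    _ = ∑ i ∈ Finset.range k, σ (x i) • f^[i + 1] v +
          σ (x k) • ∑ i ∈ Finset.range (k + 1), a i • f^[i] v := by
        rw [Finset.sum_range_succ, hv]
    _ = ∑ i ∈ Finset.range k, x (i + 1) • f^[i + 1] v + x 0 • f^[0] v := by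
        rw [Finset.sum_range_succ', smul_add, Finset.smul_sum, ← add_assoc,
          ← Finset.sum_add_distrib, Finset.sum_congr rfl hx, hx_zero, mul_smul]
    _ = ∑ i ∈ Finset.range (k + 1), x i • f^[i] v :=
        (Finset.sum_range_succ' (fun i => x i • f^[i] v) k).symm

theorem span_fixedPoints_le_comap {R M : Type*} [Semiring R] [AddCommMonoid M] [Module R M]
    {σ : R →+* R} (f : M →ₛₗ[σ] M) :
    Submodule.span R (fixedPoints f) ≤ (Submodule.span R (fixedPoints f)).comap f :=
  Submodule.span_le.2 fun x (hx : f x = x) => by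
    simpa [hx] using Submodule.subset_span (R := R) (s := fixedPoints f) hx

theorem span_range_mapQ_eq_top {R M : Type*} [Ring R] [AddCommGroup M] [Module R M]
    {σ : R →+* R} {f : M →ₛₗ[σ] M} (hf : Submodule.span R (Set.range f) = ⊤)
    {U : Submodule R M} (hU : U ≤ U.comap f) :
    Submodule.span R (Set.range (U.mapQ U f hU)) = ⊤ := by
  rw [eq_top_iff, ← U.range_mkQ, ← Submodule.map_top, ← hf, Submodule.map_span, Submodule.span_le]
  rintro _ ⟨_, ⟨x, rfl⟩, rfl⟩
  exact Submodule.subset_span ⟨U.mkQ x, rfl⟩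

end Semilinear

section SepClosed

open Function

variable {p r : ℕ} [Fact p.Prime] {L W : Type*} [Field L] [CharP L p] [IsSepClosed L]
  [AddCommGroup W] [Module L W]

theorem exists_pow_sub_self_eq (hr : r ≠ 0) (c : L) : ∃ y : L, y ^ p ^ r - y = c := by
  obtain ⟨y, hy⟩ := IsSepClosed.exists_root_C_mul_X_pow_add_C_mul_X_add_C' p (p ^ r) 1 (-1) (-c)
    (dvd_pow_self p hr) (Nat.one_lt_pow hr (Fact.out : p.Prime).one_lt) (neg_ne_zero.2 one_ne_zero)
  exact ⟨y, by linear_combination hy⟩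

theorem exists_ne_zero_isFixedPt [FiniteDimensional L W] [Nontrivial W] (hr : r ≠ 0)
    (f : W →ₛₗ[iterateFrobenius L p r] W) (hf : Submodule.span L (Set.range f) = ⊤) :
    ∃ w ≠ 0, IsFixedPt f w := by
  have hq : 1 < p ^ r := Nat.one_lt_pow hr (Fact.out : p.Prime).one_lt
  have hq_cast : ((p ^ r : ℕ) : L) = 0 := by simp [hr]
  obtain ⟨v, hv⟩ := exists_ne (0 : W)
  have iterate_ne_zero (m : ℕ) : f^[m] v ≠ 0 := by
    rw [← iterate_map_zero f m]
    exact ((injective_of_span_range_eq_top f rfl hf).iterate m).ne hv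
  obtain ⟨k, a, hrel, hk⟩ := exists_succ_eq_sum_range (R := L) (f^[·] v) hv
  obtain ⟨i, hik, hai⟩ : ∃ i ≤ k, a i ≠ 0 := by
    by_contra! ha
    refine iterate_ne_zero (k + 1) (hrel.trans (Finset.sum_eq_zero fun i hi => ?_))
    rw [ha i (Finset.mem_range_succ_iff.1 hi), zero_smul]
  obtain ⟨x, hxk, hx_zero, hx_succ⟩ := exists_fixed_coordinates hq hq_cast hik hai
  refine ⟨∑ i ∈ Finset.range (k + 1), x i • f^[i] v, fun hsum => hk ?_,
    isFixedPt_sum_smul_iterate f hrel hx_zero fun i _ => hx_succ i⟩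
  rw [Finset.sum_range_succ] at hsum
  rw [← Submodule.smul_mem_iff _ hxk, eq_neg_of_add_eq_zero_right hsum]
  exact Submodule.neg_mem _ (Submodule.sum_mem _ fun i hi =>
    Submodule.smul_mem _ _ (Submodule.subset_span (Set.mem_image_of_mem _ hi)))

theorem exists_mem_span_fixedPoints_sub_eq (hr : r ≠ 0) (f : W →ₛₗ[iterateFrobenius L p r] W)
    {u : W} (hu : u ∈ Submodule.span L (fixedPoints f)) :
    ∃ z ∈ Submodule.span L (fixedPoints f), f z - z = u := by
  induction hu using Submodule.closure_induction with
  | zero => exact ⟨0, Submodule.zero_mem _, by simp⟩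
  | add u₁ u₂ _ _ h₁ h₂ =>
    obtain ⟨z₁, hz₁, rfl⟩ := h₁
    obtain ⟨z₂, hz₂, rfl⟩ := h₂
    exact ⟨z₁ + z₂, Submodule.add_mem _ hz₁ hz₂, by rw [map_add]; abel⟩
  | smul_mem c u hu =>
    obtain ⟨y, rfl⟩ := exists_pow_sub_self_eq (p := p) hr c
    refine ⟨y • u, Submodule.smul_mem _ _ (Submodule.subset_span hu), ?_⟩
    rw [map_smulₛₗ, iterateFrobenius_def, hu, sub_smul]

theorem span_fixedPoints_eq_top [FiniteDimensional L W] (hr : r ≠ 0)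
    (f : W →ₛₗ[iterateFrobenius L p r] W) (hf : Submodule.span L (Set.range f) = ⊤) :
    Submodule.span L (fixedPoints f) = ⊤ := by
  set U := Submodule.span L (fixedPoints f)
  by_contra hU
  have : Nontrivial (W ⧸ U) := Submodule.Quotient.nontrivial_iff.2 hU
  have hUf : U ≤ U.comap f := span_fixedPoints_le_comap f
  obtain ⟨y, hy, hfix⟩ := exists_ne_zero_isFixedPt hr _ (span_range_mapQ_eq_top hf hUf)
  obtain ⟨w, rfl⟩ := U.mkQ_surjective y
  have hw : f w - w ∈ U := (Submodule.Quotient.eq U).1 hfix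
  obtain ⟨z, hz, hzw⟩ := exists_mem_span_fixedPoints_sub_eq hr f hw
  have hwz : w - z ∈ U := Submodule.subset_span <|
    show f (w - z) = w - z by rw [map_sub, sub_eq_sub_iff_sub_eq_sub, hzw]
  exact hy ((Submodule.Quotient.mk_eq_zero U).2 ((Submodule.sub_mem_iff_left U hz).1 hwz))

theorem exists_linearEquiv_pi_map_eq_pow [FiniteDimensional L W] (hr : r ≠ 0)
    (f : W →ₛₗ[iterateFrobenius L p r] W) (hf : Submodule.span L (Set.range f) = ⊤) :
    ∃ e : W ≃ₗ[L] (Fin (Module.finrank L W) → L), ∀ w, e (f w) = fun i => e w i ^ p ^ r := by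
  have hspan := (span_fixedPoints_eq_top hr f hf).ge
  let b₀ := Module.Basis.ofSpan hspan
  have := Module.Finite.finite_basis b₀
  let b := b₀.reindex (Finite.equivFinOfCardEq (Module.finrank_eq_nat_card_basis b₀).symm)
  have hb (i) : f (b i) = b i := by
    rw [Module.Basis.reindex_apply]
    exact Module.Basis.ofSpan_subset hspan (Set.mem_range_self _)
  refine ⟨b.equivFun, fun w => b.equivFun.symm.injective ?_⟩
  calc b.equivFun.symm (b.equivFun (f w))
      = f (∑ i, b.equivFun w i • b i) := by rw [LinearEquiv.symm_apply_apply, b.sum_equivFun]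
    _ = ∑ i, b.equivFun w i ^ p ^ r • b i := by
        simp only [map_sum, map_smulₛₗ, iterateFrobenius_def, hb]
    _ = b.equivFun.symm (fun i => b.equivFun w i ^ p ^ r) := (b.equivFun_symm_apply _).symm

end SepClosed

section BaseChange

theorem span_range_eq_top_of_surjective_unitMap {p r : ℕ} {R M : Type*} [CommRing R] [ExpChar R p]
    [AddCommGroup M] [Module R M] {φ : M →+ M} {hφ : IsFrobSemilinear p r R φ}
    (hsurj : Function.Surjective (unitMap p r R φ hφ)) : Submodule.span R (Set.range φ) = ⊤ := by
  refine eq_top_iff.2 fun v _ => ?_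
  obtain ⟨z, rfl⟩ := hsurj v
  induction z using TensorProduct.induction_on with
  | zero => rw [map_zero]; exact Submodule.zero_mem _
  | tmul c m => exact Submodule.smul_mem _ (show R from c) (Submodule.subset_span ⟨m, rfl⟩)
  | add x y hx hy => rw [map_add]; exact Submodule.add_mem _ (hx trivial) (hy trivial)

variable {R A M : Type*} [CommSemiring R] [CommSemiring A] [Algebra R A] [AddCommMonoid M]
  [Module R M] {q : ℕ} {φ : M → M} {φA : A ⊗[R] M →+ A ⊗[R] M}

theorem map_smul_of_map_tmul (hφA : ∀ (c : A) (m : M), φA (c ⊗ₜ[R] m) = (c ^ q) ⊗ₜ[R] φ m) (c : A)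
    (x : A ⊗[R] M) : φA (c • x) = c ^ q • φA x := by
  induction x using TensorProduct.induction_on with
  | zero => simp only [smul_zero, map_zero]
  | tmul b m => simp only [TensorProduct.smul_tmul', hφA, smul_eq_mul, mul_pow]
  | add x y hx hy => simp only [smul_add, map_add, hx, hy]

theorem span_range_eq_top_of_map_tmul
    (hφA : ∀ (c : A) (m : M), φA (c ⊗ₜ[R] m) = (c ^ q) ⊗ₜ[R] φ m)
    (hφ : Submodule.span R (Set.range φ) = ⊤) : Submodule.span A (Set.range φA) = ⊤ := by
  rw [eq_top_iff, ← Submodule.baseChange_top, ← hφ, Submodule.baseChange_span]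
  refine Submodule.span_mono ?_
  rintro _ ⟨_, ⟨m, rfl⟩, rfl⟩
  exact ⟨1 ⊗ₜ[R] m, by rw [hφA, one_pow, TensorProduct.mk_apply]⟩

end BaseChange

theorem statement1_general (p r : ℕ) [Fact p.Prime] (hr : 0 < r)
    (K : Type*) [CommRing K] [CharP K p]
    (L : Type*) [Field L] [Algebra K L] [IsSepClosed L]
    (V : Type*) [AddCommGroup V] [Module K V] [Module.Finite K V]
    (n : ℕ) (hn : Module.finrank L (L ⊗[K] V) = n)
    (φ : V →+ V) (hφ : IsFrobSemilinear p r K φ)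
    (hsurj : Function.Surjective (unitMap p r K φ hφ))
    (φL : L ⊗[K] V →+ L ⊗[K] V)
    (hφL : ∀ (c : L) (v : V), φL (c ⊗ₜ[K] v) = (c ^ p ^ r) ⊗ₜ[K] φ v) :
    ∃ e : (L ⊗[K] V) ≃ₗ[L] (Fin n → L),
      ∀ x, e (φL x) = fun i => (e x i) ^ p ^ r := by
  subst hn
  have : CharP L p :=
    CharP.charP_iff_prime_eq_zero (Fact.out : p.Prime) |>.2 <| by
      rw [← map_natCast (algebraMap K L), CharP.cast_eq_zero, map_zero]
  let f : L ⊗[K] V →ₛₗ[iterateFrobenius L p r] L ⊗[K] V :=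
    { φL with map_smul' := map_smul_of_map_tmul hφL }
  exact exists_linearEquiv_pi_map_eq_pow hr.ne' f
    (span_range_eq_top_of_map_tmul hφL (span_range_eq_top_of_surjective_unitMap hsurj))

/-- For a finite-dimensional unit `K[F^r]`-module `(V, φ)` of dimension
`n`, the base change `K^sep ⊗_K V`, with its induced endomorphism `c ⊗ v ↦ c ^ q ⊗ φ v`,
is isomorphic as a unit `K^sep[F^r]`-module to `(K^sep)^{⊕n}` with the coordinatewise
`q`-power structure. -/
theorem statement1 (p r : ℕ) [Fact p.Prime] (hr : 0 < r)
    (K : Type*) [Field K] [CharP K p]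
    (Ksep : Type*) [Field Ksep] [Algebra K Ksep] [IsSepClosure K Ksep]
    (V : Type*) [AddCommGroup V] [Module K V] [FiniteDimensional K V]
    (n : ℕ) (hn : Module.finrank K V = n)
    (φ : V →+ V) (hφ : IsFrobSemilinear p r K φ)
    (hunit : Function.Bijective (unitMap p r K φ hφ))
    (φs : Ksep ⊗[K] V →+ Ksep ⊗[K] V)
    (hφs : ∀ (c : Ksep) (v : V), φs (c ⊗ₜ[K] v) = (c ^ p ^ r) ⊗ₜ[K] φ v) :
    ∃ e : (Ksep ⊗[K] V) ≃ₗ[Ksep] (Fin n → Ksep),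
      ∀ x, e (φs x) = fun i => (e x i) ^ p ^ r := by
  have := IsSepClosure.sep_closed (k := K) (K := Ksep)
  exact statement1_general p r hr K Ksep V n (Module.finrank_baseChange.trans hn) φ hφ hunit.2
    φs hφs
end

section
/- Let A be a Henselian local ring of characteristic p with maximal ideal m whose residue field A/m is algebraically closed, and let c = (c_{ij}) be an n×n matrix with entries in A which is invertible over A. Then reduction modulo m induces a bijection between the solution sets {(a_1, …, a_n) ∈ Aⁿ : a_k^q = Σ_{ℓ=1}^n a_ℓ·c_{ℓk} for all k} and {(ā_1, …, ā_n) ∈ (A/m)ⁿ : ā_k^q = Σ_{ℓ=1}^n ā_ℓ·c̄_{ℓk} for all k}, where c̄_{ℓk} is the image of c_{ℓk} in A/m. -/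
/-!
Common definitions: unit `R[F^r]`-modules (Emerton–Kisin / Lyubeznik style), following
the conventions of the paper.  Throughout, `q = p ^ r` and for a commutative ring `R` of
(exponential) characteristic `p`, a unit `R[F^r]`-module is an `R`-module `M` together with
an additive `q`-semilinear map `φ : M → M` whose induced structural map
`R ⊗_{Frob} M → M`, `c ⊗ m ↦ c • φ m`, is bijective.
-/

open scoped TensorProduct

/-!
Let `k` be the residue field of `A`. Over `k` the Jacobian matrix of the system
`a_j ^ q - ∑ l, a_l * c l j` is `-c`, because `q = 0` in `k`; so every zero in `kⁿ` is simple.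
Simple zeros of a square system are the algebra homomorphisms out of an étale algebra `B`, and
`Hom_A(B, A) → Hom_A(B, k)` is bijective: locally `B` is standard étale, so a homomorphism to `k`
lifts by Hensel's lemma in one variable. The lift is unique because `B` is unramified: some
`t : B ⊗[A] B` with image `1` in `B` kills every `1 ⊗ b - b ⊗ 1`, and the image of `t` under a pair
`B ⊗[A] B → A` of lifts of the same homomorphism to `k` is a unit.
-/

open IsLocalRing MvPolynomial

section EtaleLifting

variable {A B : Type*} [CommRing A] [CommRing B] [Algebra A B]

theorem algHom_eq_of_residue_eq [Algebra.EssFiniteType A B] [Algebra.FormallyUnramified A B]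
    {R : Type*} [CommRing R] [IsLocalRing R] [Algebra A R] {f g : B →ₐ[A] R}
    (h : ∀ b, residue R (f b) = residue R (g b)) : f = g := by
  obtain ⟨t, ht_mul, ht_one⟩ := Algebra.FormallyUnramified.iff_exists_tensorProduct.mp
    ‹Algebra.FormallyUnramified A B›
  let fg := Algebra.TensorProduct.lift f g fun _ _ => Commute.all _ _
  let π := IsScalarTower.toAlgHom A R (ResidueField R)
  have h_diagonal : π.comp fg = (π.comp f).comp (Algebra.TensorProduct.lmul' A) := by
    ext b
    · simp [fg]
    · simpa [fg] using! (h b).symm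
  have h_unit : IsUnit (fg t) := by
    have : residue R (fg t) = 1 := by simpa [ht_one] using! congr($h_diagonal t)
    exact isUnit_of_map_unit (residue R) _ (this ▸ isUnit_one)
  ext b
  have : (g b - f b) * fg t = 0 := by simpa [fg] using congr(fg $(ht_mul b))
  exact (sub_eq_zero.mp (h_unit.mul_left_eq_zero.mp this)).symm

theorem exists_algHom_residue_eq_of_isStandardEtale [HenselianLocalRing A]
    [Algebra.IsStandardEtale A B] (φ : B →ₐ[A] ResidueField A) :
    ∃ ψ : B →ₐ[A] A, ∀ b, residue A (ψ b) = φ b := by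
  obtain ⟨P⟩ := Algebra.IsStandardEtale.nonempty_standardEtalePresentation (R := A) (S := B)
  have hφ := P.hasMap.map φ
  have hensel := ((HenselianLocalRing.TFAE A).out 0 1 rfl rfl).mp ‹_›
  obtain ⟨a, ha, hφa⟩ := hensel P.f P.monic_f (φ P.x) hφ.1 hφ.isUnit_derivative_f.ne_zero
  let π := Algebra.ofId A (ResidueField A)
  have hPa : P.HasMap a := by
    refine ⟨by simpa using ha, isUnit_of_map_unit (residue A) _ ?_⟩
    have : residue A (Polynomial.aeval a P.g) = Polynomial.aeval (φ P.x) P.g := by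
      rw [← hφa]
      exact (Polynomial.aeval_algHom_apply π a P.g).symm
    exact this ▸ hφ.2
  let ψ : B →ₐ[A] A := (P.lift a hPa).comp P.equivRing.toAlgHom
  have hψ : π.comp ψ = φ := P.hom_ext (by simpa [ψ] using! hφa)
  exact ⟨ψ, fun b => congr($hψ b)⟩

theorem exists_algHom_residue_eq_of_isEtaleAt [HenselianLocalRing A]
    [Algebra.FinitePresentation A B] (φ : B →ₐ[A] ResidueField A)
    [(RingHom.ker φ).IsPrime] [Algebra.IsEtaleAt A (RingHom.ker φ)] :
    ∃ ψ : B →ₐ[A] A, ∀ b, residue A (ψ b) = φ b := by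
  obtain ⟨f, hf, _⟩ := Algebra.IsEtaleAt.exists_isStandardEtale (R := A) (RingHom.ker φ)
  let φ' : Localization.Away f →ₐ[A] ResidueField A :=
    IsLocalization.liftAlgHom (M := Submonoid.powers f) (f := φ) <| by
      rintro ⟨_, n, rfl⟩
      simpa using (isUnit_iff_ne_zero.mpr hf).pow n
  obtain ⟨ψ, hψ⟩ := exists_algHom_residue_eq_of_isStandardEtale φ'
  refine ⟨ψ.comp (IsScalarTower.toAlgHom A B _), fun b => ?_⟩
  simpa [φ'] using hψ (algebraMap B _ b)

theorem bijective_residue_comp_algHom [HenselianLocalRing A] [Algebra.Etale A B] :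
    Function.Bijective fun ψ : B →ₐ[A] A => (Algebra.ofId A (ResidueField A)).comp ψ := by
  refine ⟨fun f g h => algHom_eq_of_residue_eq fun b => congr($h b), fun φ => ?_⟩
  have : (RingHom.ker φ).IsPrime := RingHom.ker_isPrime φ
  obtain ⟨ψ, hψ⟩ := exists_algHom_residue_eq_of_isEtaleAt φ
  exact ⟨ψ, AlgHom.ext hψ⟩

end EtaleLifting

/-- A system of as many polynomial equations `v j = 0` as there are unknowns. -/
abbrev SquareSystem (A ι : Type*) [CommRing A] : Type _ := ι → MvPolynomial ι A

namespace SquareSystem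

variable {A ι : Type*} [CommRing A]

section Zeros

/-- The zeros of a square system with coordinates in an algebra `R` over the coefficient ring. -/
def zeros (v : SquareSystem A ι) (R : Type*) [CommRing R] [Algebra A R] : Set (ι → R) :=
  {a | ∀ j, aeval a (v j) = 0}

variable {R S : Type*} [CommRing R] [CommRing S] [Algebra A R] [Algebra A S]

theorem comp_mem_zeros {v : SquareSystem A ι} {a : ι → R} (ha : a ∈ v.zeros R) (f : R →ₐ[A] S) :
    f ∘ a ∈ v.zeros S := fun j => by
  rw [Function.comp_def, ← comp_aeval_apply, ha j, map_zero]

end Zeros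

section Jacobian

variable [Fintype ι] [DecidableEq ι]

/-- The Jacobian determinant of a square system. -/
noncomputable def jacobian (v : SquareSystem A ι) : MvPolynomial ι A :=
  (Matrix.of fun i j => pderiv i (v j)).det

theorem aeval_jacobian {R : Type*} [CommRing R] [Algebra A R] (v : SquareSystem A ι) (a : ι → R) :
    aeval a v.jacobian = (Matrix.of fun i j => aeval a (pderiv i (v j))).det := by
  rw [jacobian, AlgHom.map_det]
  rfl

/-- The algebra representing the simple zeros of a square system, those at which the Jacobian
determinant is invertible: the equations are imposed first, then the Jacobian is inverted. -/
abbrev SimpleZeroAlgebra (v : SquareSystem A ι) : Type _ :=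
  Localization.Away (Ideal.Quotient.mk (Ideal.span (Set.range v)) v.jacobian)

namespace SimpleZeroAlgebra

instance etale (v : SquareSystem A ι) : Algebra.Etale A v.SimpleZeroAlgebra := by
  let P : Algebra.PreSubmersivePresentation A (MvPolynomial ι A ⧸ Ideal.span (Set.range v)) ι ι :=
    .naive id Function.injective_id
  have hP : P.jacobian = Ideal.Quotient.mk _ v.jacobian := by
    rw [Algebra.PreSubmersivePresentation.jacobian_eq_jacobiMatrix_det]
    have : P.jacobiMatrix = Matrix.of fun i j => pderiv i (v j) := by
      ext1 i j
      exact Algebra.PreSubmersivePresentation.jacobiMatrix_naive ..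
    rw [this]
    rfl
  let Q : Algebra.SubmersivePresentation _ v.SimpleZeroAlgebra Unit Unit :=
    .localizationAway _ (Ideal.Quotient.mk (Ideal.span (Set.range v)) v.jacobian)
  let QP : Algebra.SubmersivePresentation A v.SimpleZeroAlgebra (Unit ⊕ ι) (Unit ⊕ ι) :=
    { Q.toPreSubmersivePresentation.comp P with
      jacobian_isUnit := by
        rw [Algebra.PreSubmersivePresentation.comp_jacobian_eq_jacobian_smul_jacobian, hP,
          Algebra.smul_def]
        exact (IsLocalization.Away.algebraMap_isUnit _).mul Q.jacobian_isUnit }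
  rw [Algebra.Etale.iff_isStandardSmoothOfRelativeDimension_zero]
  exact QP.isStandardSmoothOfRelativeDimension (by simp [Algebra.Presentation.dimension])

/-- The tautological simple zero. -/
noncomputable def root (v : SquareSystem A ι) (i : ι) : v.SimpleZeroAlgebra :=
  algebraMap _ _ (Ideal.Quotient.mk (Ideal.span (Set.range v)) (X i))

variable {v : SquareSystem A ι} {R : Type*} [CommRing R] [Algebra A R]

theorem root_mem_zeros : root v ∈ v.zeros v.SimpleZeroAlgebra := fun j => by
  let π := (IsScalarTower.toAlgHom A (MvPolynomial ι A ⧸ Ideal.span (Set.range v))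
    v.SimpleZeroAlgebra).comp (Ideal.Quotient.mkₐ A _)
  have hπ : aeval (root v) = π := (aeval_unique π).symm
  have hv : Ideal.Quotient.mk (Ideal.span (Set.range v)) (v j) = 0 :=
    Ideal.Quotient.eq_zero_iff_mem.mpr (Ideal.subset_span ⟨j, rfl⟩)
  simp [hπ, π, hv]

theorem exists_algHom_comp_root_eq {a : ι → R} (ha : a ∈ v.zeros R)
    (hJ : IsUnit (aeval a v.jacobian)) : ∃ f : v.SimpleZeroAlgebra →ₐ[A] R, f ∘ root v = a := by
  let f₀ : (MvPolynomial ι A ⧸ Ideal.span (Set.range v)) →ₐ[A] R :=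
    Ideal.Quotient.liftₐ _ (aeval a) <|
      Ideal.span_le (I := RingHom.ker (aeval a)).mpr (Set.range_subset_iff.mpr ha)
  let f : v.SimpleZeroAlgebra →ₐ[A] R :=
    IsLocalization.liftAlgHom (M := .powers (Ideal.Quotient.mk _ v.jacobian)) (f := f₀) <| by
      rintro ⟨_, n, rfl⟩
      simpa using (show IsUnit (f₀ _) from hJ).pow n
  refine ⟨f, funext fun i => ?_⟩
  have hf : f (root v i) = f₀ (Ideal.Quotient.mk _ (X i)) := by simp [f, root]
  exact hf.trans (aeval_X a i)

theorem algHom_ext {f g : v.SimpleZeroAlgebra →ₐ[A] R} (h : f ∘ root v = g ∘ root v) : f = g := by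
  apply Localization.algHom_ext
  apply Ideal.Quotient.algHom_ext
  exact MvPolynomial.algHom_ext fun i => congrFun h i

end SimpleZeroAlgebra

theorem existsUnique_mem_zeros_residue_comp_eq [HenselianLocalRing A] {v : SquareSystem A ι}
    {b : ι → ResidueField A} (hb : b ∈ v.zeros (ResidueField A))
    (hJ : aeval b v.jacobian ≠ 0) : ∃! a, a ∈ v.zeros A ∧ residue A ∘ a = b := by
  obtain ⟨φ, rfl⟩ := SimpleZeroAlgebra.exists_algHom_comp_root_eq hb hJ.isUnit
  obtain ⟨ψ, rfl⟩ := bijective_residue_comp_algHom.surjective φ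
  refine ⟨ψ ∘ SimpleZeroAlgebra.root v,
    ⟨comp_mem_zeros SimpleZeroAlgebra.root_mem_zeros ψ, rfl⟩, ?_⟩
  rintro a ⟨ha, haψ⟩
  have hJa : IsUnit (aeval a v.jacobian) := by
    rw [← haψ] at hJ
    refine isUnit_of_map_unit (residue A) _ ?_
    exact comp_aeval_apply a (Algebra.ofId A (ResidueField A)) v.jacobian ▸ hJ.isUnit
  obtain ⟨ψ', rfl⟩ := SimpleZeroAlgebra.exists_algHom_comp_root_eq ha hJa
  rw [bijective_residue_comp_algHom.injective (SimpleZeroAlgebra.algHom_ext haψ)]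

theorem bijOn_residue_zeros [HenselianLocalRing A] {v : SquareSystem A ι}
    (hv : ∀ b ∈ v.zeros (ResidueField A), aeval b v.jacobian ≠ 0) :
    Set.BijOn (residue A ∘ ·) (v.zeros A) (v.zeros (ResidueField A)) := by
  have hmaps : Set.MapsTo (residue A ∘ ·) (v.zeros A) (v.zeros (ResidueField A)) :=
    fun _ ha => comp_mem_zeros ha (Algebra.ofId A (ResidueField A))
  refine ⟨hmaps, fun a ha a' ha' h => ?_, fun b hb => ?_⟩
  · exact (existsUnique_mem_zeros_residue_comp_eq (hmaps ha) (hv _ (hmaps ha))).unique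
      ⟨ha, rfl⟩ ⟨ha', h.symm⟩
  · exact (existsUnique_mem_zeros_residue_comp_eq hb (hv b hb)).exists

end Jacobian

section PowEqVecMul

variable [Fintype ι]

/-- The system `a_j ^ q = ∑ l, a_l * c l j` in the unknowns `a_j`. -/
noncomputable def powEqVecMul (q : ℕ) (c : Matrix ι ι A) : SquareSystem A ι :=
  fun j => X j ^ q - ∑ l, X l * C (c l j)

variable {R : Type*} [CommRing R] [Algebra A R] {q : ℕ} (c : Matrix ι ι A)

theorem mem_zeros_powEqVecMul {a : ι → R} :
    a ∈ (powEqVecMul q c).zeros R ↔ ∀ j, a j ^ q = ∑ l, a l * algebraMap A R (c l j) := by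
  simp [zeros, powEqVecMul, sub_eq_zero]

theorem aeval_jacobian_powEqVecMul [DecidableEq ι] (hq : (q : R) = 0) (a : ι → R) :
    aeval a (powEqVecMul q c).jacobian = (-c.map (algebraMap A R)).det := by
  rw [aeval_jacobian]
  congr 1
  ext i j
  simp [powEqVecMul, Derivation.leibniz_pow, hq, pderiv_X, Pi.single_apply, apply_ite (aeval a)]

end PowEqVecMul

end SquareSystem

open SquareSystem in
theorem statement6_general {A ι : Type*} [CommRing A] [HenselianLocalRing A] [Fintype ι]
    [DecidableEq ι] (q : ℕ) (hq : (q : ResidueField A) = 0) (c : Matrix ι ι A) (hc : IsUnit c) :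
    Set.BijOn (residue A ∘ ·) {a : ι → A | ∀ j, a j ^ q = ∑ l, a l * c l j}
      {b : ι → ResidueField A | ∀ j, b j ^ q = ∑ l, b l * residue A (c l j)} := by
  have hunit : IsUnit (-c.map (algebraMap A (ResidueField A))) :=
    (hc.map (algebraMap A (ResidueField A)).mapMatrix).neg
  have hsimple : ∀ b ∈ (powEqVecMul q c).zeros (ResidueField A),
      aeval b (powEqVecMul q c).jacobian ≠ 0 := fun b _ => by
    rw [aeval_jacobian_powEqVecMul c hq]
    exact ((Matrix.isUnit_iff_isUnit_det _).mp hunit).ne_zero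
  convert bijOn_residue_zeros hsimple using 1 <;> ext <;> exact (mem_zeros_powEqVecMul c).symm

/-- Let `A` be a Henselian local ring of characteristic `p` with
algebraically closed residue field, and let `c` be an invertible `n × n` matrix over
`A`.  Then reduction modulo the maximal ideal is a bijection between the solutions in
`Aⁿ` and in `(A/m)ⁿ` of the system `a_k ^ q = ∑ ℓ, a_ℓ · c_{ℓ k}`. -/
theorem statement6 (p r : ℕ) [Fact p.Prime] (hr : 0 < r)
    (A : Type*) [CommRing A] [HenselianLocalRing A] [CharP A p]
    [IsAlgClosed (IsLocalRing.ResidueField A)]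
    (n : ℕ) (c : Matrix (Fin n) (Fin n) A) (hc : IsUnit c) :
    Set.BijOn (fun (a : Fin n → A) (i : Fin n) => IsLocalRing.residue A (a i))
      {a : Fin n → A | ∀ j, a j ^ p ^ r = ∑ l, a l * c l j}
      {abar : Fin n → IsLocalRing.ResidueField A |
        ∀ j, abar j ^ p ^ r = ∑ l, abar l * IsLocalRing.residue A (c l j)} := by
  have hq : ((p ^ r : ℕ) : IsLocalRing.ResidueField A) = 0 := by
    rw [← map_natCast (IsLocalRing.residue A), Nat.cast_pow, CharP.cast_eq_zero, zero_pow hr.ne',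
      map_zero]
  exact statement6_general (p ^ r) hq c hc
end

section
/- Let A be a Henselian local ring of characteristic p whose residue field is algebraically closed. Then for every n×n matrix (a_{ij}) with entries in A and every (b_1, …, b_n) ∈ Aⁿ there exists (b'_1, …, b'_n) ∈ Aⁿ such that b'_i − Σ_{j=1}^n (b'_j)^q · a_{ji} = b_i for all i = 1, …, n. -/
/-!
Common definitions: unit `R[F^r]`-modules (Emerton–Kisin / Lyubeznik style), following
the conventions of the paper.  Throughout, `q = p ^ r` and for a commutative ring `R` of
(exponential) characteristic `p`, a unit `R[F^r]`-module is an `R`-module `M` together with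
an additive `q`-semilinear map `φ : M → M` whose induced structural map
`R ⊗_{Frob} M → M`, `c ⊗ m ↦ c • φ m`, is bijective.
-/

open scoped TensorProduct

/-!
Let `k` be the residue field of `A`. Since `q` vanishes in `k`, the Jacobian matrix of the system
is residually the identity, so by the multivariate Hensel lemma it is enough to solve the system
over `k`. That lemma reduces to the one-variable case because the algebra defined by the system
becomes étale once its Jacobian is inverted, and étale algebras are locally standard étale.

Over `k` the system reads `x - φ x = b` with `φ` semilinear for the `q`-power map, and it is solved
inside the span of `b, φ b, …, φ^m b`, where `φ^(m+1) b` is a combination of these. Comparing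
coefficients expresses each coefficient of `x` as a polynomial in the `q`-th power of the last one,
which is therefore a fixed point of a polynomial `f` with `f' = 0`. Such a fixed point exists over a
separably closed field because `f - X` has derivative `-1`.
-/

section Hensel

open IsLocalRing MvPolynomial

theorem exists_comp_eq_of_localizationAway {A B K S : Type*} [CommRing A] [CommRing B] [CommRing K]
    [CommRing S] [Algebra A B] [Algebra A K] [Algebra A S] {τ : B →ₐ[A] K} {ψ : S →ₐ[A] K} {f : S}
    (hf : IsUnit (ψ f)) (h : ∀ ψ' : Localization.Away f →ₐ[A] K, ∃ s, τ.comp s = ψ') :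
    ∃ s : S →ₐ[A] B, τ.comp s = ψ := by
  obtain ⟨s, hs⟩ := h (IsLocalization.Away.liftAlgHom f hf)
  refine ⟨s.comp (IsScalarTower.toAlgHom A S _), ?_⟩
  rw [← AlgHom.comp_assoc, hs]
  ext x
  simp

theorem etale_localizationAway_jacobian {A S ι σ : Type*} [CommRing A] [CommRing S] [Algebra A S]
    [Finite ι] [Finite σ] {P : Algebra.PreSubmersivePresentation A S ι σ} (hP : P.dimension = 0) :
    Algebra.Etale A (Localization.Away P.jacobian) := by
  let Q := Algebra.PreSubmersivePresentation.localizationAway (Localization.Away P.jacobian)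
    P.jacobian
  have isUnit_jacobian : IsUnit (Q.comp P).jacobian := by
    rw [Q.comp_jacobian_eq_jacobian_smul_jacobian,
      Algebra.PreSubmersivePresentation.localizationAway_jacobian, Algebra.smul_def]
    exact (IsLocalization.Away.algebraMap_isUnit _).mul (IsLocalization.Away.algebraMap_isUnit _)
  have dimension_eq_zero : (Q.comp P).dimension = 0 := by
    rw [Algebra.PreSubmersivePresentation.dimension_comp_eq_dimension_add_dimension, hP, add_zero]
    exact Algebra.Presentation.localizationAway_dimension_zero ..
  have := Algebra.SubmersivePresentation.isStandardSmoothOfRelativeDimension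
    ⟨Q.comp P, isUnit_jacobian⟩ dimension_eq_zero
  infer_instance

theorem jacobian_naive_id {A ι : Type*} [CommRing A] [Fintype ι] [DecidableEq ι]
    (F : ι → MvPolynomial ι A) :
    (Algebra.PreSubmersivePresentation.naive (v := F) id Function.injective_id).jacobian =
      Ideal.Quotient.mk _ (Matrix.of fun i j => pderiv j (F i)).det := by
  rw [Algebra.PreSubmersivePresentation.jacobian_eq_jacobiMatrix_det, ← Matrix.det_transpose]
  congr 2
  ext1 i j
  exact Algebra.PreSubmersivePresentation.jacobiMatrix_naive ..

variable {A : Type*} [CommRing A] [HenselianLocalRing A]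

theorem exists_lift_residueField_of_isStandardEtale {S : Type*} [CommRing S] [Algebra A S]
    [Algebra.IsStandardEtale A S] (ψ : S →ₐ[A] ResidueField A) :
    ∃ s : S →ₐ[A] A, (Algebra.ofId A (ResidueField A)).comp s = ψ := by
  obtain ⟨⟨P⟩⟩ := ‹Algebra.IsStandardEtale A S›
  have hasMap_residue := P.hasMap.map ψ
  have hensel := ((HenselianLocalRing.TFAE A).out 0 1).1 ‹HenselianLocalRing A›
  obtain ⟨a, ha, residue_a⟩ := hensel P.f P.monic_f (ψ P.x)
    hasMap_residue.1 hasMap_residue.isUnit_derivative_f.ne_zero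
  have hasMap : P.HasMap a := by
    refine ⟨by simpa [Polynomial.IsRoot] using ha, ?_⟩
    have isUnit_residue := hasMap_residue.2
    rw [← residue_a, ← ResidueField.algebraMap_eq,
      Polynomial.aeval_algebraMap_apply] at isUnit_residue
    exact IsUnit.of_map (residue A) _ isUnit_residue
  refine ⟨(P.lift a hasMap).comp P.equivRing.toAlgHom, P.hom_ext ?_⟩
  simpa using residue_a

theorem exists_lift_residueField_of_etale {S : Type*} [CommRing S] [Algebra A S]
    [Algebra.Etale A S] (ψ : S →ₐ[A] ResidueField A) :
    ∃ s : S →ₐ[A] A, (Algebra.ofId A (ResidueField A)).comp s = ψ := by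
  have : (RingHom.ker ψ).IsPrime := RingHom.ker_isPrime ψ
  obtain ⟨f, hf, _⟩ := Algebra.IsEtaleAt.exists_isStandardEtale (R := A) (RingHom.ker ψ)
  exact exists_comp_eq_of_localizationAway (isUnit_iff_ne_zero.2 hf)
    exists_lift_residueField_of_isStandardEtale

theorem exists_lift_residueField_of_jacobian_ne_zero {S ι σ : Type*} [CommRing S] [Algebra A S]
    [Finite ι] [Finite σ] {P : Algebra.PreSubmersivePresentation A S ι σ} (hP : P.dimension = 0)
    {ψ : S →ₐ[A] ResidueField A} (hψ : ψ P.jacobian ≠ 0) :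
    ∃ s : S →ₐ[A] A, (Algebra.ofId A (ResidueField A)).comp s = ψ := by
  have := etale_localizationAway_jacobian hP
  exact exists_comp_eq_of_localizationAway (isUnit_iff_ne_zero.2 hψ)
    exists_lift_residueField_of_etale

theorem multivariate_hensels_lemma {ι : Type*} [Fintype ι]
    [DecidableEq ι] {F : ι → MvPolynomial ι A} {x₀ : ι → ResidueField A}
    (hx₀ : ∀ i, aeval x₀ (F i) = 0)
    (hJ : (Matrix.of fun i j => aeval x₀ (pderiv j (F i))).det ≠ 0) :
    ∃ x : ι → A, (∀ i, aeval x (F i) = 0) ∧ ∀ i, residue A (x i) = x₀ i := by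
  let I := Ideal.span (Set.range F)
  let P : Algebra.PreSubmersivePresentation A (MvPolynomial ι A ⧸ I) ι ι :=
    .naive id Function.injective_id
  have I_le_ker : I ≤ RingHom.ker (aeval (R := A) x₀) := by
    rw [Ideal.span_le]
    rintro _ ⟨i, rfl⟩
    exact hx₀ i
  let ψ : (MvPolynomial ι A ⧸ I) →ₐ[A] ResidueField A :=
    Ideal.Quotient.liftₐ I (aeval x₀) I_le_ker
  have jacobian_ne_zero : ψ P.jacobian ≠ 0 := by
    rw [jacobian_naive_id]
    change aeval x₀ (Matrix.det _) ≠ 0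
    rwa [AlgHom.map_det]
  obtain ⟨s, hs⟩ := exists_lift_residueField_of_jacobian_ne_zero
    (by simp [Algebra.Presentation.dimension]) jacobian_ne_zero
  refine ⟨fun i => s (Ideal.Quotient.mk I (X i)), fun i => ?_, fun i => ?_⟩
  · have s_comp_mk : aeval (fun i => s (Ideal.Quotient.mk I (X i))) =
        s.comp (Ideal.Quotient.mkₐ A I) := by ext; simp
    have mk_F : Ideal.Quotient.mkₐ A I (F i) = 0 :=
      Ideal.Quotient.eq_zero_iff_mem.2 (Ideal.subset_span ⟨i, rfl⟩)
    rw [s_comp_mk, AlgHom.comp_apply, mk_F, map_zero]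
  · calc residue A (s (Ideal.Quotient.mk I (X i))) = ψ (Ideal.Quotient.mk I (X i)) :=
          DFunLike.congr_fun hs _
      _ = x₀ i := aeval_X x₀ i

end Hensel

section SeparablyClosedField

open Polynomial

variable {k : Type*} [Field k] [IsSepClosed k]

theorem exists_eval_eq_self_of_derivative_eq_zero {f : k[X]} (hf : derivative f = 0) :
    ∃ t, f.eval t = t := by
  have derivative_sub_X : derivative (f - X) = -1 := by simp [hf]
  have separable : (f - X).Separable := by
    rw [separable_def, derivative_sub_X]
    exact isCoprime_one_right.neg_right
  have degree_ne_zero : (f - X).degree ≠ 0 := fun h => by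
    rw [eq_C_of_degree_eq_zero h, derivative_C] at derivative_sub_X
    simp at derivative_sub_X
  obtain ⟨t, ht⟩ := IsSepClosed.exists_root (f - X) degree_ne_zero separable
  exact ⟨t, by simpa [sub_eq_zero] using ht⟩

theorem exists_pow_recurrence_of_natCast_eq_zero {q : ℕ} (hq : (q : k) = 0) (c : ℕ → k) (m : ℕ) :
    ∃ y : ℕ → k, y 0 = 1 + c 0 * y m ^ q ∧ ∀ i, y (i + 1) = y i ^ q + c (i + 1) * y m ^ q := by
  let Y : ℕ → k[X] := Nat.rec (1 + C (c 0) * X ^ q) fun i f => f ^ q + C (c (i + 1)) * X ^ q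
  have derivative_Y (i : ℕ) : derivative (Y i) = 0 := by
    cases i <;> simp [Y, derivative_pow, hq]
  obtain ⟨t, ht⟩ := exists_eval_eq_self_of_derivative_eq_zero (derivative_Y m)
  exact ⟨fun i => (Y i).eval t, by simp [ht, Y], fun i => by simp [ht, Y]⟩

end SeparablyClosedField

theorem exists_eq_sum_range_smul_of_isNoetherian {R M : Type*} [Semiring R] [AddCommMonoid M]
    [Module R M] [IsNoetherian R M] (e : ℕ → M) :
    ∃ (m : ℕ) (c : ℕ → R), e (m + 1) = ∑ i ∈ Finset.range (m + 1), c i • e i := by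
  let W : ℕ →o Submodule R M :=
    { toFun m := Submodule.span R (e '' Finset.range (m + 1))
      monotone' _ _ h := Submodule.span_mono <| Set.image_mono <| by gcongr }
  obtain ⟨m, hm⟩ := WellFoundedGT.monotone_chain_condition W
  have mem_W : e (m + 1) ∈ W m := by
    rw [hm (m + 1) m.le_succ]
    exact Submodule.subset_span ⟨m + 1, by simp, rfl⟩
  obtain ⟨c, hc⟩ := Submodule.mem_span_image_finset_iff_exists_fun' R |>.1 mem_W
  exact ⟨m, c, hc.symm⟩

namespace IsFrobSemilinear

variable {p r : ℕ}

theorem sum_smul_iterate_sub_map_eq {R M : Type*} [CommRing R] [ExpChar R p] [AddCommGroup M]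
    [Module R M] {φ : M →+ M} (hφ : IsFrobSemilinear p r R φ) {b : M} {c y : ℕ → R} {m : ℕ}
    (hc : φ^[m + 1] b = ∑ i ∈ Finset.range (m + 1), c i • φ^[i] b)
    (hy₀ : y 0 = 1 + c 0 * y m ^ p ^ r)
    (hy : ∀ i, y (i + 1) = y i ^ p ^ r + c (i + 1) * y m ^ p ^ r) :
    ∑ i ∈ Finset.range (m + 1), y i • φ^[i] b
      - φ (∑ i ∈ Finset.range (m + 1), y i • φ^[i] b) = b := by
  have map_smul (s : R) (v : M) : φ (s • v) = s ^ p ^ r • φ v := hφ s v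
  have map_combination : φ (∑ i ∈ Finset.range (m + 1), y i • φ^[i] b) =
      ∑ i ∈ Finset.range m, y i ^ p ^ r • φ^[i + 1] b +
        y m ^ p ^ r • ∑ i ∈ Finset.range (m + 1), c i • φ^[i] b := by
    simp only [← hc, map_sum, map_smul, Finset.sum_range_succ, map_add,
      Function.iterate_succ_apply']
  rw [map_combination, sub_eq_iff_eq_add, Finset.sum_range_succ',
    Finset.sum_range_succ' (fun i => c i • _)]
  simp only [hy, hy₀, add_smul, Finset.sum_add_distrib, smul_add, Finset.smul_sum, smul_smul,
    Function.iterate_zero_apply, one_smul, mul_comm (c _)]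
  abel

theorem exists_sub_map_eq {k V : Type*} [Fact p.Prime] [Field k] [CharP k p] [IsSepClosed k]
    [AddCommGroup V] [Module k V] [Module.Finite k V] {φ : V →+ V}
    (hφ : IsFrobSemilinear p r k φ) (hr : r ≠ 0) (b : V) : ∃ x, x - φ x = b := by
  have natCast_eq_zero : ((p ^ r : ℕ) : k) = 0 := by simp [hr]
  obtain ⟨m, c, hc⟩ := exists_eq_sum_range_smul_of_isNoetherian (R := k) fun i => φ^[i] b
  obtain ⟨y, hy₀, hy⟩ := exists_pow_recurrence_of_natCast_eq_zero natCast_eq_zero c m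
  exact ⟨_, hφ.sum_smul_iterate_sub_map_eq hc hy₀ hy⟩

end IsFrobSemilinear

section FrobVecMul

variable (p r : ℕ) {R ι : Type*} [CommRing R] [ExpChar R p] [Fintype ι] (a : Matrix ι ι R)

/-- The additive endomorphism of `ι → R` with matrix `a` in the standard basis that is semilinear
for the `p ^ r`-power map. As in the system to be solved, vectors multiply `a` from the left. -/
noncomputable def frobVecMul : (ι → R) →+ (ι → R) :=
  a.vecMulLinear.toAddMonoidHom.comp ((iterateFrobenius R p r).toAddMonoidHom.compLeft ι)

theorem frobVecMul_apply (v : ι → R) (i : ι) :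
    frobVecMul p r a v i = ∑ j, v j ^ p ^ r * a j i :=
  rfl

theorem isFrobSemilinear_frobVecMul : IsFrobSemilinear p r R (frobVecMul p r a) := by
  intro c v
  ext i
  simp [frobVecMul_apply, mul_pow, Finset.mul_sum, mul_assoc]

end FrobVecMul

section PowVecMulSystem

open IsLocalRing MvPolynomial

variable {A ι : Type*} [CommRing A] [Fintype ι] {q : ℕ} {a : Matrix ι ι A} {b : ι → A}

/-- The polynomials whose common zeros are the solutions of `x i - ∑ j, x j ^ q * a j i = b i`. -/
noncomputable def powVecMulSystem (q : ℕ) (a : Matrix ι ι A) (b : ι → A) (i : ι) :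
    MvPolynomial ι A :=
  X i - ∑ j, X j ^ q * C (a j i) - C (b i)

theorem aeval_powVecMulSystem_eq_zero_iff {S : Type*} [CommRing S] [Algebra A S] {x : ι → S}
    {i : ι} : aeval x (powVecMulSystem q a b i) = 0 ↔
      x i - ∑ j, x j ^ q * algebraMap A S (a j i) = algebraMap A S (b i) := by
  simp [powVecMulSystem, sub_eq_zero]

theorem aeval_pderiv_powVecMulSystem_of_natCast_eq_zero [DecidableEq ι] {S : Type*} [CommRing S]
    [Algebra A S] (hq : (q : S) = 0) (x : ι → S) (i j : ι) :
    aeval x (pderiv j (powVecMulSystem q a b i)) = (1 : Matrix ι ι S) i j := by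
  simp [powVecMulSystem, Derivation.leibniz_pow, hq, pderiv_X, Pi.single_apply, Matrix.one_apply]

theorem exists_sub_sum_pow_mul_eq_of_residue [HenselianLocalRing A]
    (hq : (q : ResidueField A) = 0) {x₀ : ι → ResidueField A}
    (hx₀ : ∀ i, x₀ i - ∑ j, x₀ j ^ q * residue A (a j i) = residue A (b i)) :
    ∃ x : ι → A, (∀ i, x i - ∑ j, x j ^ q * a j i = b i) ∧ ∀ i, residue A (x i) = x₀ i := by
  classical
  have jacobian_eq_one :
      (Matrix.of fun i j => aeval x₀ (pderiv j (powVecMulSystem q a b i))) = 1 :=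
    Matrix.ext <| aeval_pderiv_powVecMulSystem_of_natCast_eq_zero hq x₀
  obtain ⟨x, hx, residue_x⟩ := multivariate_hensels_lemma
    (fun i => aeval_powVecMulSystem_eq_zero_iff.2 (hx₀ i)) (by simp [jacobian_eq_one])
  exact ⟨x, fun i => aeval_powVecMulSystem_eq_zero_iff.1 (hx i), residue_x⟩

end PowVecMulSystem

open IsLocalRing in
theorem statement11_general {p r : ℕ} [Fact p.Prime] (hr : r ≠ 0) {A : Type*} [CommRing A]
    [HenselianLocalRing A] [CharP (ResidueField A) p] [IsSepClosed (ResidueField A)] {ι : Type*}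
    [Fintype ι] (a : Matrix ι ι A) (b : ι → A) :
    ∃ x : ι → A, ∀ i, x i - ∑ j, x j ^ p ^ r * a j i = b i := by
  have natCast_eq_zero : ((p ^ r : ℕ) : ResidueField A) = 0 := by simp [hr]
  obtain ⟨x₀, hx₀⟩ := (isFrobSemilinear_frobVecMul p r (a.map (residue A))).exists_sub_map_eq hr
    fun i => residue A (b i)
  obtain ⟨x, hx, -⟩ := exists_sub_sum_pow_mul_eq_of_residue natCast_eq_zero (congrFun hx₀)
  exact ⟨x, hx⟩

/-- Over a Henselian local ring of characteristic `p` with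
algebraically closed residue field, every system `b'_i − ∑ j, (b'_j)^q · a_{ji} = b_i`
has a solution. -/
theorem statement11 (p r : ℕ) [Fact p.Prime] (hr : 0 < r)
    (A : Type*) [CommRing A] [HenselianLocalRing A] [CharP A p]
    [IsAlgClosed (IsLocalRing.ResidueField A)]
    (n : ℕ) (a : Matrix (Fin n) (Fin n) A) (b : Fin n → A) :
    ∃ b' : Fin n → A, ∀ i, b' i - ∑ j, (b' j) ^ p ^ r * a j i = b i := by
  have : CharP (IsLocalRing.ResidueField A) p :=
    (CharP.charP_iff_prime_eq_zero Fact.out).2 <| by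
      rw [← map_natCast (IsLocalRing.residue A), CharP.cast_eq_zero, map_zero]
  exact statement11_general hr.ne' a b
end

section
/- Let S → T be a homomorphism of commutative rings of characteristic p, and let (M, φ) be a unit S[F^r]-module. Then there is a well-defined additive map φ_T on T ⊗_S M determined by φ_T(t ⊗ m) = t^q ⊗ φ(m), it satisfies φ_T(c·x) = c^q·φ_T(x) for all c ∈ T and x ∈ T ⊗_S M, and (T ⊗_S M, φ_T) is a unit T[F^r]-module. Moreover, if (M, φ) is finitely generated as a left S[F^r]-module, then (T ⊗_S M, φ_T) is finitely generated as a left T[F^r]-module. -/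
/-!
Common definitions: unit `R[F^r]`-modules (Emerton–Kisin / Lyubeznik style), following
the conventions of the paper.  Throughout, `q = p ^ r` and for a commutative ring `R` of
(exponential) characteristic `p`, a unit `R[F^r]`-module is an `R`-module `M` together with
an additive `q`-semilinear map `φ : M → M` whose induced structural map
`R ⊗_{Frob} M → M`, `c ⊗ m ↦ c • φ m`, is bijective.
-/

open scoped TensorProduct

/-!
Being a unit module means that `φ : M → M` exhibits its target as the base change of its source
along the Frobenius of `S`. In the square with horizontal maps `φ` and `φ_T` and both vertical maps
`M → T ⊗[S] M`, `m ↦ 1 ⊗ m`, the composite through `φ` is a base change along `S → S → T`. Since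
ring homomorphisms commute with Frobenius, this composite of rings is also `S → T → T`; as the left
vertical map is a base change along `S → T`, it cancels, so `φ_T` is a base change along the
Frobenius of `T`. For finite generation, the preimage in `M` of a `φ_T`-stable `T`-submodule is
`φ`-stable, and the elements `1 ⊗ m` span `T ⊗[S] M`.
-/

section BaseChange

variable {S S' T T' : Type*} [CommSemiring S] [CommSemiring S'] [CommSemiring T] [CommSemiring T']
  {σ : S →+* S'} {τ : T →+* T'}
  {M N P Q : Type*} [AddCommMonoid M] [AddCommMonoid N] [AddCommMonoid P] [AddCommMonoid Q]
  [Module S M] [Module S' N]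

/-- The `σ`-semilinear map `f : M → N` exhibits `N` as the base change of `M` along `σ`, that is,
`S' ⊗[S] M → N`, `c ⊗ m ↦ c • f m`, is bijective. The `S`-module structures on `S'` and `N` are
built from `σ` inside the definition, so that `σ` may be a nontrivial endomorphism of a ring. -/
def IsBaseChangeAlong (f : M →ₛₗ[σ] N) : Prop :=
  letI := σ.toAlgebra
  letI := Module.compHom N σ
  haveI : IsScalarTower S S' N := .of_compHom S S' N
  IsBaseChange S' ({ f with map_smul' := f.map_smulₛₗ } : M →ₗ[S] N)

variable [Algebra S T] [Algebra S' T']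

theorem IsBaseChangeAlong.of_square
    [Module S P] [Module T P] [IsScalarTower S T P]
    [Module S' Q] [Module T' Q] [IsScalarTower S' T' Q]
    (hστ : τ.comp (algebraMap S T) = (algebraMap S' T').comp σ)
    {i : M →ₗ[S] P} (hi : IsBaseChange T i) {j : N →ₗ[S'] Q} (hj : IsBaseChange T' j)
    {f : M →ₛₗ[σ] N} (hf : IsBaseChangeAlong f)
    {g : P →ₛₗ[τ] Q} (hg : ∀ m, g (i m) = j (f m)) :
    IsBaseChangeAlong g := by
  let : Algebra S S' := σ.toAlgebra
  let : Algebra T T' := τ.toAlgebra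
  let : Algebra S T' := (τ.comp (algebraMap S T)).toAlgebra
  let : Module S N := .compHom N σ
  let : Module T Q := .compHom Q τ
  let : Module S Q := .compHom Q (τ.comp (algebraMap S T))
  have : IsScalarTower S S' N := .of_compHom S S' N
  have : IsScalarTower T T' Q := .of_compHom T T' Q
  have : IsScalarTower S T' Q := .of_compHom S T' Q
  have : IsScalarTower S T T' := .of_algebraMap_eq' rfl
  have : IsScalarTower S S' T' := .of_algebraMap_eq' hστ
  have : IsScalarTower S T Q := .to₁₂₄ S T T' Q
  have : IsScalarTower S S' Q := .to₁₂₄ S S' T' Q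
  refine IsBaseChange.of_comp hi ?_
  convert! IsBaseChange.comp hf hj using 1
  exact LinearMap.ext hg

/-- The base change `t ⊗ m ↦ τ t ⊗ f m` of a semilinear map `f` along a commutative square of
rings with sides `σ` and `τ`. -/
noncomputable def semilinearBaseChange
    (hστ : τ.comp (algebraMap S T) = (algebraMap S' T').comp σ) (f : M →ₛₗ[σ] N) :
    T ⊗[S] M →ₛₗ[τ] T' ⊗[S'] N :=
  let τₛₗ : T →ₛₗ[σ] T' :=
    { τ with
      map_smul' := fun s t => by
        have hs : τ (algebraMap S T s) = algebraMap S' T' (σ s) := RingHom.congr_fun hστ s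
        simp [Algebra.smul_def, hs] }
  { TensorProduct.map τₛₗ f with
    map_smul' := fun c x => by
      induction x using TensorProduct.induction_on with
      | zero => simp
      | add x y hx hy => simp_all
      | tmul t m => simp [τₛₗ, TensorProduct.smul_tmul'] }

@[simp]
theorem semilinearBaseChange_tmul (hστ : τ.comp (algebraMap S T) = (algebraMap S' T').comp σ)
    (f : M →ₛₗ[σ] N) (t : T) (m : M) :
    semilinearBaseChange hστ f (t ⊗ₜ m) = τ t ⊗ₜ f m :=
  rfl

theorem IsBaseChangeAlong.semilinearBaseChange
    (hστ : τ.comp (algebraMap S T) = (algebraMap S' T').comp σ) {f : M →ₛₗ[σ] N}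
    (hf : IsBaseChangeAlong f) : IsBaseChangeAlong (semilinearBaseChange hστ f) :=
  .of_square hστ (TensorProduct.isBaseChange S M T) (TensorProduct.isBaseChange S' N T') hf
    fun m => by simp

end BaseChange

section UnitModule

variable {p r : ℕ} {R M : Type*} [CommRing R] [ExpChar R p] [AddCommGroup M] [Module R M]
  {φ : M →+ M}

/-- An additive `p ^ r`-semilinear map, bundled as a map semilinear over the iterated Frobenius. -/
def IsFrobSemilinear.toSemilinearMap (hφ : IsFrobSemilinear p r R φ) :
    M →ₛₗ[iterateFrobenius R p r] M where
  __ := φ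
  map_smul' := hφ

theorem bijective_unitMap_iff_isBaseChangeAlong (hφ : IsFrobSemilinear p r R φ) :
    Function.Bijective (unitMap p r R φ hφ) ↔ IsBaseChangeAlong hφ.toSemilinearMap :=
  -- `FrobTwist p r R` carries, up to unfolding, the `R`-module structure that
  -- `IsBaseChangeAlong` builds from the iterated Frobenius, and both maps send
  -- `c ⊗ m` to `c • φ m`.
  Iff.rfl

theorem isFrobSemilinear_toAddMonoidHom (f : M →ₛₗ[iterateFrobenius R p r] M) :
    IsFrobSemilinear p r R f.toAddMonoidHom :=
  f.map_smulₛₗ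

theorem IsBaseChangeAlong.isUnitFMod {f : M →ₛₗ[iterateFrobenius R p r] M}
    (hf : IsBaseChangeAlong f) : IsUnitFMod p r R f.toAddMonoidHom :=
  ⟨isFrobSemilinear_toAddMonoidHom f, (bijective_unitMap_iff_isBaseChangeAlong _).mpr hf⟩

end UnitModule

theorem IsFGFMod.of_span_range_eq_top {S T M P : Type*} [CommRing S] [CommRing T] [Algebra S T]
    [AddCommGroup M] [Module S M] [AddCommGroup P] [Module S P] [Module T P] [IsScalarTower S T P]
    {φ : M →+ M} (hφ : IsFGFMod S φ) {i : M →ₗ[S] P} (hi : Submodule.span T (Set.range i) = ⊤)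
    {ψ : P →+ P} (hψ : ∀ m, ψ (i m) = i (φ m)) : IsFGFMod T ψ := by
  classical
  obtain ⟨s, hs⟩ := hφ
  refine ⟨s.image i, fun N hN hsN => ?_⟩
  have comap_eq_top : (N.restrictScalars S).comap i = ⊤ := by
    refine hs _ (fun m hm => ?_) fun m hm => hsN (Finset.mem_image_of_mem i hm)
    simpa [hψ] using hN (i m) hm
  rw [eq_top_iff, ← hi, Submodule.span_le]
  rintro _ ⟨m, rfl⟩
  exact comap_eq_top.ge (Submodule.mem_top (x := m))

theorem span_range_tensorProduct_mk_one (S T M : Type*) [CommSemiring S] [Semiring T] [Algebra S T]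
    [AddCommMonoid M] [Module S M] :
    Submodule.span T (Set.range (TensorProduct.mk S T M 1)) = ⊤ := by
  rw [← LinearMap.coe_range, ← Submodule.map_top, ← Submodule.baseChange_eq_span,
    Submodule.baseChange_top]

theorem tensorProduct_addMonoidHom_ext {R M N A : Type*} [CommSemiring R] [AddCommMonoid M]
    [AddCommMonoid N] [Module R M] [Module R N] [AddZeroClass A] {f g : M ⊗[R] N →+ A}
    (h : ∀ m n, f (m ⊗ₜ n) = g (m ⊗ₜ n)) : f = g := by
  ext x
  induction x using TensorProduct.induction_on with
  | zero => simp only [map_zero]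
  | tmul m n => exact h m n
  | add x y hx hy => simp only [map_add, hx, hy]

/-- Base change of unit modules: for a homomorphism `S → T` of
commutative rings of characteristic `p` and a unit `S[F^r]`-module `(M, φ)`, there is a
unique additive map `φ_T` on `T ⊗_S M` with `φ_T (t ⊗ m) = t^q ⊗ φ m`; it is
`q`-semilinear, `(T ⊗_S M, φ_T)` is a unit `T[F^r]`-module, and it is finitely
generated over `T[F^r]` whenever `(M, φ)` is finitely generated over `S[F^r]`. -/
theorem statement16 (p r : ℕ) [Fact p.Prime] (hr : 0 < r)
    (S : Type*) [CommRing S] [CharP S p]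
    (T : Type*) [CommRing T] [CharP T p] [Algebra S T]
    (M : Type*) [AddCommGroup M] [Module S M]
    (φ : M →+ M) (hφ : IsFrobSemilinear p r S φ)
    (hunit : Function.Bijective (unitMap p r S φ hφ)) :
    ∃ φT : T ⊗[S] M →+ T ⊗[S] M,
      (∀ (t : T) (m : M), φT (t ⊗ₜ[S] m) = (t ^ p ^ r) ⊗ₜ[S] φ m) ∧
      (∀ φT' : T ⊗[S] M →+ T ⊗[S] M,
        (∀ (t : T) (m : M), φT' (t ⊗ₜ[S] m) = (t ^ p ^ r) ⊗ₜ[S] φ m) → φT' = φT) ∧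
      IsFrobSemilinear p r T φT ∧
      IsUnitFMod p r T φT ∧
      (IsFGFMod S φ → IsFGFMod T φT) := by
  let Φ := semilinearBaseChange (RingHom.iterateFrobenius_comm (algebraMap S T) p r).symm
    hφ.toSemilinearMap
  have isBaseChangeAlong_Φ : IsBaseChangeAlong Φ :=
    ((bijective_unitMap_iff_isBaseChangeAlong hφ).mp hunit).semilinearBaseChange _
  have Φ_tmul (t : T) (m : M) : Φ (t ⊗ₜ[S] m) = (t ^ p ^ r) ⊗ₜ[S] φ m := rfl
  refine ⟨Φ.toAddMonoidHom, Φ_tmul, fun ψ hψ => ?_, isFrobSemilinear_toAddMonoidHom Φ,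
    isBaseChangeAlong_Φ.isUnitFMod, fun hfg => hfg.of_span_range_eq_top
      (span_range_tensorProduct_mk_one S T M) fun m => ?_⟩
  · exact tensorProduct_addMonoidHom_ext hψ
  · simpa using Φ_tmul 1 m
end
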